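/- (Rank access structure duality.) For all nested F_{q^m}-linear codes C_2 ⊊ C_1 ⊆ F_{q^m}^n and every F_q-subspace L ⊆ F_q^n, one has dim_{F_{q^m}}((C_2^⊥)^L) − dim_{F_{q^m}}((C_1^⊥)^L) + dim_{F_{q^m}}(C_1^{L^⊥}) − dim_{F_{q^m}}(C_2^{L^⊥}) = dim C_1 − dim C_2. In particular, for every 0 ≤ r ≤ ℓ = dim(C_1/C_2): dim((C_2^⊥)^L / (C_1^⊥)^L) = r if and only if dim(C_1^{L^⊥} / C_2^{L^⊥}) = ℓ − r. -/

import Mathlib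

open Submodule Module

namespace RankPaper

variable {n : ℕ}

/-- The coordinatewise `q^i`-th power map on `Fqm^n`. -/
def qpowMap (q i : ℕ) {Fqm : Type} [Field Fqm] (v : Fin n → Fqm) : Fin n → Fqm :=
  fun j => v j ^ q ^ i

/-- The Galois closure `D* = Σ_{i=0}^{m-1} D^{q^i}` of a subspace (as the span of the
union of the images of `D` under the coordinatewise `q^i`-power maps, `0 ≤ i < m`). -/
def galClosure (q m : ℕ) {Fqm : Type} [Field Fqm] (D : Submodule Fqm (Fin n → Fqm)) :
    Submodule Fqm (Fin n → Fqm) :=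
  Submodule.span Fqm (⋃ i ∈ Finset.range m, qpowMap q i '' (D : Set (Fin n → Fqm)))

/-- `D` is Galois closed if `D = D*`. -/
def GaloisClosed (q m : ℕ) {Fqm : Type} [Field Fqm] (D : Submodule Fqm (Fin n → Fqm)) : Prop :=
  galClosure q m D = D

/-- Rank weight of a subspace: `wt_R(D) = dim_{Fqm} D*`. -/
noncomputable def wtR (q m : ℕ) {Fqm : Type} [Field Fqm]
    (D : Submodule Fqm (Fin n → Fqm)) : ℕ :=
  finrank Fqm (galClosure q m D)

/-- Rank weight of a vector: `wt_R(c) = wt_R(span {c})`. -/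
noncomputable def wtRv (q m : ℕ) {Fqm : Type} [Field Fqm] (c : Fin n → Fqm) : ℕ :=
  wtR q m (Submodule.span Fqm ({c} : Set (Fin n → Fqm)))

/-- Hamming weight of a subspace: the number of coordinates where some element is nonzero. -/
noncomputable def wtH {Fqm : Type} [Field Fqm] (D : Submodule Fqm (Fin n → Fqm)) : ℕ :=
  {i : Fin n | ∃ d ∈ D, d i ≠ 0}.ncard

/-- `r`-th generalized rank weight of a linear code. -/
noncomputable def dR (q m : ℕ) {Fqm : Type} [Field Fqm]
    (C : Submodule Fqm (Fin n → Fqm)) (r : ℕ) : ℕ :=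
  sInf { dv | ∃ V : Submodule Fqm (Fin n → Fqm),
    GaloisClosed q m V ∧ r ≤ finrank Fqm ↥(C ⊓ V) ∧ dv = finrank Fqm ↥V }

/-- `r`-th generalized Hamming weight of a linear code. -/
noncomputable def dH {Fqm : Type} [Field Fqm]
    (C : Submodule Fqm (Fin n → Fqm)) (r : ℕ) : ℕ :=
  sInf { w | ∃ D : Submodule Fqm (Fin n → Fqm), D ≤ C ∧ finrank Fqm ↥D = r ∧ w = wtH D }

/-- `r`-th relative generalized rank weight of a nested code pair. -/
noncomputable def MR (q m : ℕ) {Fqm : Type} [Field Fqm]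
    (C₁ C₂ : Submodule Fqm (Fin n → Fqm)) (r : ℕ) : ℕ :=
  sInf { dv | ∃ V : Submodule Fqm (Fin n → Fqm), GaloisClosed q m V ∧
    r ≤ finrank Fqm ↥(C₁ ⊓ V) - finrank Fqm ↥(C₂ ⊓ V) ∧ dv = finrank Fqm ↥V }

/-- Minimum rank distance of an arbitrary (possibly nonlinear) code. -/
noncomputable def dRset (q m : ℕ) {Fqm : Type} [Field Fqm] (C : Set (Fin n → Fqm)) : ℕ :=
  sInf { w | ∃ c₁ ∈ C, ∃ c₂ ∈ C, c₁ ≠ c₂ ∧ w = wtRv q m (c₁ - c₂) }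

/-- The linear functional `x ↦ Σ_j x_j y_j` (dot product with `y`). -/
def dotLin {K : Type} [Field K] (y : Fin n → K) : (Fin n → K) →ₗ[K] K :=
  ∑ j, y j • LinearMap.proj j

/-- Orthogonal complement of a subspace with respect to the standard bilinear form. -/
def perp {K : Type} [Field K] (L : Submodule K (Fin n → K)) : Submodule K (Fin n → K) :=
  ⨅ y ∈ L, LinearMap.ker (dotLin y)

/-- The coordinatewise inclusion `Fq^n → Fqm^n`. -/
def embFq (Fq Fqm : Type) [Field Fq] [Field Fqm] [Algebra Fq Fqm] :
    (Fin n → Fq) →ₗ[Fq] (Fin n → Fqm) :=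
  LinearMap.pi fun j => (Algebra.linearMap Fq Fqm).comp (LinearMap.proj j)

/-- `V_L = L ⊗ Fqm`, the `Fqm`-span of `L ⊆ Fq^n` inside `Fqm^n`. -/
def VL {Fq : Type} (Fqm : Type) [Field Fq] [Field Fqm] [Algebra Fq Fqm]
    (L : Submodule Fq (Fin n → Fq)) : Submodule Fqm (Fin n → Fqm) :=
  Submodule.span Fqm (embFq Fq Fqm '' (L : Set (Fin n → Fq)))

/-- Rank-punctured code `C^L`: the image of `C` in `Fqm^n / V_{L^⊥}`. -/
noncomputable def punct {Fq Fqm : Type} [Field Fq] [Field Fqm] [Algebra Fq Fqm]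
    (L : Submodule Fq (Fin n → Fq)) (C : Submodule Fqm (Fin n → Fqm)) :
    Submodule Fqm ((Fin n → Fqm) ⧸ VL Fqm (perp L)) :=
  Submodule.map (VL Fqm (perp L)).mkQ C

/-!
For a nondegenerate form on a finite-dimensional space and subspaces `C`, `W`, the kernel of
`C^⊥ → V / W^⊥` is `C^⊥ ⊓ W^⊥ = (C ⊔ W)^⊥`, and the kernel of `C → V / W` is `C ⊓ W`. Rank-nullity
and `dim (C ⊔ W) + dim (C ⊓ W) = dim C + dim W` then show that the image of `C^⊥` in `V / W^⊥`
and the image of `C` in `V / W` have dimensions differing by `dim W - dim C`. Extension of scalars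
commutes with orthogonal complements, so for `W = V_L` these images are `(C^⊥)^L` and `C^{L^⊥}`;
subtracting the relations for `C₁` and `C₂` cancels `dim V_L`.
-/

section RankNullity

variable {K V V' : Type*} [DivisionRing K] [AddCommGroup V] [Module K V] [AddCommGroup V']
  [Module K V']

theorem finrank_map_add_finrank_inf_ker (f : V →ₗ[K] V') (C : Submodule K V)
    [FiniteDimensional K C] :
    finrank K (C.map f) + finrank K ↥(C ⊓ LinearMap.ker f) = finrank K C := by
  rw [← LinearMap.finrank_range_add_finrank_ker (f.domRestrict C), LinearMap.range_domRestrict,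
    LinearMap.ker_domRestrict, ← Submodule.map_comap_subtype, Submodule.finrank_map_subtype_eq]

theorem finrank_map_mkQ_add_finrank_inf (C W : Submodule K V) [FiniteDimensional K C] :
    finrank K (C.map W.mkQ) + finrank K ↥(C ⊓ W) = finrank K C := by
  have rank_nullity := finrank_map_add_finrank_inf_ker W.mkQ C
  rwa [ker_mkQ] at rank_nullity

end RankNullity

section Orthogonal

variable {R M : Type*} [CommSemiring R] [AddCommMonoid M] [Module R M]

theorem mem_orthogonal_span_iff (B : LinearMap.BilinForm R M) {s : Set M} {x : M} :
    x ∈ B.orthogonal (span R s) ↔ ∀ y ∈ s, B y x = 0 :=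
  span_le (p := LinearMap.ker (B.flip x))

theorem orthogonal_sup (B : LinearMap.BilinForm R M) (N P : Submodule R M) :
    B.orthogonal (N ⊔ P) = B.orthogonal N ⊓ B.orthogonal P := by
  ext x
  exact sup_le_iff (c := LinearMap.ker (B.flip x))

variable {K V : Type*} [Field K] [AddCommGroup V] [Module K V] [FiniteDimensional K V]
  {B : LinearMap.BilinForm K V}

theorem finrank_add_finrank_orthogonal_of_nondegenerate (hB : B.Nondegenerate)
    (W : Submodule K V) : finrank K W + finrank K (B.orthogonal W) = finrank K V := by
  rw [LinearMap.BilinForm.finrank_orthogonal hB, Nat.add_sub_cancel' W.finrank_le]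

theorem finrank_map_mkQ_orthogonal (hB : B.Nondegenerate) (C W : Submodule K V) :
    finrank K ((B.orthogonal C).map (B.orthogonal W).mkQ) + finrank K C =
      finrank K W + finrank K (C.map W.mkQ) := by
  have dim_image_orthogonal := finrank_map_mkQ_add_finrank_inf (B.orthogonal C) (B.orthogonal W)
  rw [← orthogonal_sup] at dim_image_orthogonal
  have dim_image := finrank_map_mkQ_add_finrank_inf C W
  have dim_orthogonal := finrank_add_finrank_orthogonal_of_nondegenerate hB C
  have dim_orthogonal_sup := finrank_add_finrank_orthogonal_of_nondegenerate hB (C ⊔ W)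
  have dim_sup_add_inf := finrank_sup_add_finrank_inf_eq C W
  lia

end Orthogonal

section DotProduct

theorem isRefl_dotProductBilin {R ι : Type*} [CommSemiring R] [Fintype ι] :
    (dotProductBilin R R : LinearMap.BilinForm R (ι → R)).IsRefl := fun x y h => by
  rwa [dotProductBilin_apply_apply, dotProduct_comm]

theorem nondegenerate_dotProductBilin {R ι : Type*} [CommRing R] [Fintype ι] :
    (dotProductBilin R R : LinearMap.BilinForm R (ι → R)).Nondegenerate :=
  isRefl_dotProductBilin.nondegenerate_iff_separatingLeft.2 dotProduct_eq_zero

variable {K : Type} [Field K]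

theorem perp_eq_orthogonal (L : Submodule K (Fin n → K)) :
    perp L = LinearMap.BilinForm.orthogonal (dotProductBilin K K) L := by
  ext x
  simp [perp, dotLin, dotProduct]

theorem finrank_add_finrank_perp (L : Submodule K (Fin n → K)) :
    finrank K L + finrank K (perp L) = n := by
  rw [perp_eq_orthogonal, finrank_add_finrank_orthogonal_of_nondegenerate
    nondegenerate_dotProductBilin, finrank_fin_fun]

theorem perp_perp (L : Submodule K (Fin n → K)) : perp (perp L) = L := by
  simp only [perp_eq_orthogonal]
  exact LinearMap.BilinForm.orthogonal_orthogonal (B := dotProductBilin K K)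
    nondegenerate_dotProductBilin isRefl_dotProductBilin L

end DotProduct

section ExtensionOfScalars

variable {F : Type} (K : Type) [Field F] [Field K] [Algebra F K]

theorem embFq_dotProduct_embFq (x y : Fin n → F) :
    embFq F K x ⬝ᵥ embFq F K y = algebraMap F K (x ⬝ᵥ y) :=
  (RingHom.map_dotProduct (algebraMap F K) x y).symm

theorem VL_span (s : Set (Fin n → F)) : VL K (span F s) = span K (embFq F K '' s) := by
  rw [VL, ← map_coe, map_span, span_span_of_tower]

theorem linearIndependent_embFq_comp {ι : Type*} {v : ι → Fin n → F}
    (hv : LinearIndependent F v) : LinearIndependent K (embFq F K ∘ v) :=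
  linearIndependent_algebraMap_comp_iff.2 hv

theorem finrank_VL (L : Submodule F (Fin n → F)) : finrank K (VL K L) = finrank F L := by
  let b := finBasis F L
  let v : Fin (finrank F L) → Fin n → F := L.subtype ∘ b
  have v_indep : LinearIndependent F v := b.linearIndependent.map' L.subtype L.ker_subtype
  have span_v : span F (Set.range v) = L := by
    rw [Set.range_comp, ← map_span, b.span_eq, map_subtype_top]
  have VL_eq_span : VL K L = span K (Set.range (embFq F K ∘ v)) := by
    rw [Set.range_comp, ← VL_span, span_v]
  rw [VL_eq_span, finrank_span_eq_card (linearIndependent_embFq_comp K v_indep), Fintype.card_fin]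

theorem VL_perp (L : Submodule F (Fin n → F)) : VL K (perp L) = perp (VL K L) := by
  refine eq_of_le_of_finrank_eq ?_ ?_
  · refine span_le.2 ?_
    rintro _ ⟨x, hx, rfl⟩
    rw [perp_eq_orthogonal] at hx ⊢
    refine (mem_orthogonal_span_iff _).2 ?_
    rintro _ ⟨y, hy, rfl⟩
    calc embFq F K y ⬝ᵥ embFq F K x = algebraMap F K (y ⬝ᵥ x) := embFq_dotProduct_embFq K y x
      _ = algebraMap F K 0 := congrArg _ (hx y hy)
      _ = 0 := map_zero _
  · have dim_perp_L := finrank_add_finrank_perp L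
    have dim_perp_VL := finrank_add_finrank_perp (VL K L)
    rw [finrank_VL] at dim_perp_VL ⊢
    lia

end ExtensionOfScalars

section Puncturing

variable {F K : Type} [Field F] [Field K] [Algebra F K]

theorem finrank_punct_perp (L : Submodule F (Fin n → F)) (C : Submodule K (Fin n → K)) :
    finrank K (punct L (perp C)) + finrank K C =
      finrank F L + finrank K (punct (perp L) C) := by
  rw [punct, punct, perp_perp, VL_perp, perp_eq_orthogonal, perp_eq_orthogonal,
    finrank_map_mkQ_orthogonal nondegenerate_dotProductBilin, finrank_VL]

theorem stmt18_general (C₁ C₂ : Submodule K (Fin n → K)) (L : Submodule F (Fin n → F)) :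
    ((finrank K (punct L (perp C₂)) : ℤ) - finrank K (punct L (perp C₁))
        + finrank K (punct (perp L) C₁) - finrank K (punct (perp L) C₂)
      = finrank K C₁ - finrank K C₂) ∧
    ∀ r : ℤ, (finrank K (punct L (perp C₂)) : ℤ) - finrank K (punct L (perp C₁)) = r ↔
      (finrank K (punct (perp L) C₁) : ℤ) - finrank K (punct (perp L) C₂)
        = finrank K C₁ - finrank K C₂ - r := by
  have duality₁ := finrank_punct_perp L C₁
  have duality₂ := finrank_punct_perp L C₂
  exact ⟨by lia, fun r => by lia⟩

end Puncturing

/-- rank access structure duality: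
`dim (C₂^⊥)^L − dim (C₁^⊥)^L + dim C₁^{L^⊥} − dim C₂^{L^⊥} = dim C₁ − dim C₂`,
and the induced correspondence `r ↔ ℓ − r` between the two quotient dimensions. -/
theorem stmt18 (q m n : ℕ) (Fq Fqm : Type) [Field Fq] [Field Fqm] [Algebra Fq Fqm]
    [Finite Fqm] (hq : Nat.card Fq = q) (hm : finrank Fq Fqm = m)
    (C₁ C₂ : Submodule Fqm (Fin n → Fqm)) (hC : C₂ < C₁)
    (L : Submodule Fq (Fin n → Fq)) :
    ((finrank Fqm (punct L (perp C₂)) : ℤ) - (finrank Fqm (punct L (perp C₁)) : ℤ)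
        + (finrank Fqm (punct (perp L) C₁) : ℤ) - (finrank Fqm (punct (perp L) C₂) : ℤ)
      = (finrank Fqm C₁ : ℤ) - (finrank Fqm C₂ : ℤ)) ∧
    (∀ r : ℕ, r ≤ finrank Fqm C₁ - finrank Fqm C₂ →
      (((finrank Fqm (punct L (perp C₂)) : ℤ) - (finrank Fqm (punct L (perp C₁)) : ℤ)
          = (r : ℤ)) ↔
        ((finrank Fqm (punct (perp L) C₁) : ℤ) - (finrank Fqm (punct (perp L) C₂) : ℤ)
          = (finrank Fqm C₁ : ℤ) - (finrank Fqm C₂ : ℤ) - (r : ℤ)))) :=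
  (stmt18_general C₁ C₂ L).imp_right fun correspondence r _ => correspondence r

end RankPaper
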